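/- arXiv:1412.6461 — 2 statements merged into one kernel-verified Lean document; each statement's English description precedes it below -/
import Mathlib

section
/- Define D(p,q,w) := w² − p·w − q and the rational functions X := −1/D and Y := −(w−p)/D. Then for all real numbers p, q, r, s, w with D(p,q,w) ≠ 0, setting t := q·r − p·s − 1, the identity (∂X/∂p)·s + (∂X/∂q)·t + (∂X/∂w)·Y = (∂Y/∂p)·r + (∂Y/∂q)·s + (∂Y/∂w)·X holds, all partial derivatives being taken at the point (p,q,w). (Here p,q,r,s,t stand for u_x,u_y,u_xx,u_xy,u_yy, t being eliminated via the Gibbons–Tsarev equation; the identity is exactly the cross-derivative compatibility condition asserting that the system w_x = X, w_y = Y is a differential covering of the Gibbons–Tsarev equation.) -/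
/-- Denominator `D(p,q,w) = w² − pw − q` of the covering of the Gibbons–Tsarev
equation. -/
noncomputable def covD (p q w : ℝ) : ℝ := w ^ 2 - p * w - q

/-- `X = −1/D` from the covering of the Gibbons–Tsarev equation. -/
noncomputable def covX (p q w : ℝ) : ℝ := -1 / covD p q w

/-- `Y = −(w − p)/D` from the covering of the Gibbons–Tsarev equation. -/
noncomputable def covY (p q w : ℝ) : ℝ := -(w - p) / covD p q w

/-!
Write `D_x`, `D_y` for the total derivatives. Since `X = -1/D` and `Y = (w - p) X`, the condition
`D_y X = D_x Y` becomes, after multiplication by `D²` and use of `X D = -1`,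
`D_y D = (w - p) D_x D + r D + 1`. Both sides contain the same `X`-term `(2w - p)(w - p) X`,
because `D_w = 2w - p`. In the rest the powers of `w` cancel, leaving exactly
`t = q r - p s - 1`. Thus the Gibbons–Tsarev equation is not only sufficient for compatibility but
also necessary, over any nontrivially normed field.
-/

section TotalDerivative

variable {𝕜 : Type*} [NontriviallyNormedField 𝕜]

/-- The total derivative of `F(p, q, w)` when the derivatives of `p`, `q`, `w` are `dp`, `dq`, `dw`.
It is built from partial derivatives, so it takes junk values where one of them does not exist. -/
noncomputable def totalDeriv (F : 𝕜 → 𝕜 → 𝕜 → 𝕜) (p q w dp dq dw : 𝕜) : 𝕜 :=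
  deriv (fun p' => F p' q w) p * dp
    + deriv (fun q' => F p q' w) q * dq
    + deriv (fun w' => F p q w') w * dw

/-- Existence of the three partial derivatives of `F` at `(p, q, w)`, under which `totalDeriv`
obeys the rules of calculus. -/
structure PartiallyDifferentiableAt (F : 𝕜 → 𝕜 → 𝕜 → 𝕜) (p q w : 𝕜) : Prop where
  fst : DifferentiableAt 𝕜 (fun p' => F p' q w) p
  snd : DifferentiableAt 𝕜 (fun q' => F p q' w) q
  thd : DifferentiableAt 𝕜 (fun w' => F p q w') w

theorem totalDeriv_div {F G : 𝕜 → 𝕜 → 𝕜 → 𝕜} {p q w : 𝕜}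
    (hF : PartiallyDifferentiableAt F p q w) (hG : PartiallyDifferentiableAt G p q w)
    (hG₀ : G p q w ≠ 0) (dp dq dw : 𝕜) :
    totalDeriv (fun p q w => F p q w / G p q w) p q w dp dq dw =
      (totalDeriv F p q w dp dq dw * G p q w - F p q w * totalDeriv G p q w dp dq dw)
        / G p q w ^ 2 := by
  simp only [totalDeriv, deriv_fun_div hF.fst hG.fst hG₀, deriv_fun_div hF.snd hG.snd hG₀,
    deriv_fun_div hF.thd hG.thd hG₀]
  ring

end TotalDerivative

namespace GibbonsTsarev

section Field

variable {𝕜 : Type*} [Field 𝕜]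

/-- The denominator `D` of the covering, over an arbitrary field; `covD` is the case `𝕜 = ℝ`. -/
def denom (p q w : 𝕜) : 𝕜 := w ^ 2 - p * w - q

/-- The right-hand side `X` of `w_x = X`, over an arbitrary field; `covX` is the case `𝕜 = ℝ`. -/
def rhsX (p q w : 𝕜) : 𝕜 := -1 / denom p q w

/-- The right-hand side `Y` of `w_y = Y`, over an arbitrary field; `covY` is the case `𝕜 = ℝ`. -/
def rhsY (p q w : 𝕜) : 𝕜 := -(w - p) / denom p q w

theorem rhsX_mul_denom {p q w : 𝕜} (hD : denom p q w ≠ 0) : rhsX p q w * denom p q w = -1 :=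
  div_mul_cancel₀ _ hD

theorem rhsY_eq_mul_rhsX (p q w : 𝕜) : rhsY p q w = (w - p) * rhsX p q w := by
  unfold rhsX rhsY
  ring

end Field

variable {𝕜 : Type*} [NontriviallyNormedField 𝕜]

theorem partiallyDifferentiableAt_denom (p q w : 𝕜) :
    PartiallyDifferentiableAt denom p q w := by
  unfold denom
  constructor <;> fun_prop

theorem totalDeriv_denom (p q w dp dq dw : 𝕜) :
    totalDeriv denom p q w dp dq dw = (2 * w - p) * dw - w * dp - dq := by
  have deriv_p : deriv (fun p' => denom p' q w) p = -w := by simp [denom]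
  have deriv_q : deriv (fun q' => denom p q' w) q = -1 := by simp [denom]
  have deriv_w : deriv (fun w' => denom p q w') w = 2 * w - p := by
    simpa [denom] using
      (((hasDerivAt_id w).pow 2).sub ((hasDerivAt_id w).const_mul p)).sub_const q |>.deriv
  rw [totalDeriv, deriv_p, deriv_q, deriv_w]
  ring

theorem totalDeriv_rhsX {p q w : 𝕜} (hD : denom p q w ≠ 0) (dp dq dw : 𝕜) :
    totalDeriv rhsX p q w dp dq dw = totalDeriv denom p q w dp dq dw / denom p q w ^ 2 := by
  have hnum : PartiallyDifferentiableAt (fun _ _ _ : 𝕜 => -1) p q w := by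
    constructor <;> fun_prop
  have hnum' : totalDeriv (fun _ _ _ : 𝕜 => -1) p q w dp dq dw = 0 := by simp [totalDeriv]
  have h := totalDeriv_div hnum (partiallyDifferentiableAt_denom p q w) hD dp dq dw
  rwa [hnum', zero_mul, neg_one_mul, zero_sub, neg_neg] at h

theorem totalDeriv_rhsY {p q w : 𝕜} (hD : denom p q w ≠ 0) (dp dq dw : 𝕜) :
    totalDeriv rhsY p q w dp dq dw =
      ((dp - dw) * denom p q w + (w - p) * totalDeriv denom p q w dp dq dw)
        / denom p q w ^ 2 := by
  have hnum : PartiallyDifferentiableAt (fun p _ w : 𝕜 => -(w - p)) p q w := by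
    constructor <;> fun_prop
  have hnum' : totalDeriv (fun p _ w : 𝕜 => -(w - p)) p q w dp dq dw = dp - dw := by
    simp [totalDeriv, sub_eq_add_neg]
  have h := totalDeriv_div hnum (partiallyDifferentiableAt_denom p q w) hD dp dq dw
  rwa [hnum', neg_mul, sub_neg_eq_add] at h

theorem compatibility_iff_totalDeriv_denom {p q w : 𝕜} (hD : denom p q w ≠ 0) (r s t : 𝕜) :
    totalDeriv rhsX p q w s t (rhsY p q w) = totalDeriv rhsY p q w r s (rhsX p q w) ↔
      totalDeriv denom p q w s t (rhsY p q w) =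
        (w - p) * totalDeriv denom p q w r s (rhsX p q w) + r * denom p q w + 1 := by
  rw [totalDeriv_rhsX hD, totalDeriv_rhsY hD, div_left_inj' (pow_ne_zero 2 hD), sub_mul,
    rhsX_mul_denom hD]
  constructor <;> intro h <;> linear_combination h

end GibbonsTsarev

open GibbonsTsarev in
theorem covering_GT_compatibility_general {𝕜 : Type*} [NontriviallyNormedField 𝕜]
    (p q r s t w : 𝕜) (hD : denom p q w ≠ 0) :
    totalDeriv rhsX p q w s t (rhsY p q w) = totalDeriv rhsY p q w r s (rhsX p q w) ↔
      t = q * r - p * s - 1 := by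
  rw [compatibility_iff_totalDeriv_denom hD, totalDeriv_denom, totalDeriv_denom,
    rhsY_eq_mul_rhsX, denom]
  constructor <;> intro h <;> linear_combination -h

/-- Cross-derivative compatibility `D_y(X) = D_x(Y)` of the covering
`w_x = X`, `w_y = Y` over the Gibbons–Tsarev equation
`u_yy = u_y·u_xx − u_x·u_xy − 1`, where `p,q,r,s,t` stand for
`u_x,u_y,u_xx,u_xy,u_yy` and `t = q·r − p·s − 1` is eliminated via the equation. -/
theorem covering_GT_compatibility (p q r s w : ℝ)
    (hD : covD p q w ≠ 0) :
    deriv (fun p' => covX p' q w) p * s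
      + deriv (fun q' => covX p q' w) q * (q * r - p * s - 1)
      + deriv (fun w' => covX p q w') w * covY p q w
    = deriv (fun p' => covY p' q w) p * r
      + deriv (fun q' => covY p q' w) q * s
      + deriv (fun w' => covY p q w') w * covX p q w :=
  (covering_GT_compatibility_general p q r s _ w hD).2 rfl
end

section
/- Let u : ℝ² → ℝ be a smooth solution of Equation (1): u_y·u_xy − u_x·u_yy = e^y·u_xx, with u_x nowhere zero, and let v : ℝ² → ℝ be a smooth function satisfying v_x = u_y/u_x and v_y = e^y/u_x on ℝ². Then v satisfies the equation v_y − v_yy = v_y·v_xx − v_x·v_xy at every point of ℝ². -/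
/-- Partial derivative of a function on `ℝ²` in the direction `v`. -/
noncomputable def pd (v : ℝ × ℝ) (f : ℝ × ℝ → ℝ) : ℝ × ℝ → ℝ :=
  fun p => fderiv ℝ f p v

/-- Coordinates are `(x, y)`. -/
noncomputable def dx : (ℝ × ℝ → ℝ) → ℝ × ℝ → ℝ := pd (1, 0)
noncomputable def dy : (ℝ × ℝ → ℝ) → ℝ × ℝ → ℝ := pd (0, 1)

/-!
Write `D = ∂_y - v_x ∂_x`. The relation `u_y = v_x u_x` says `D u = 0`, and differentiating it in
`x` gives `D u_x = v_xx u_x`. Applying `D` to `v_y u_x = e^y`, with `D e^y = e^y = v_y u_x`, and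
dividing by `u_x` yields `D v_y = v_y - v_y v_xx`, which is the claim because `v_yx = v_xy`.
Equation (1) is exactly this last symmetry, written in terms of `u`.
-/

open scoped Topology

theorem differentiableAt_fderiv_of_contDiffAt_two {𝕜 E F : Type*} [NontriviallyNormedField 𝕜]
    [NormedAddCommGroup E] [NormedSpace 𝕜 E] [NormedAddCommGroup F] [NormedSpace 𝕜 F]
    {f : E → F} {x : E} (hf : ContDiffAt 𝕜 2 f x) : DifferentiableAt 𝕜 (fderiv 𝕜 f) x :=
  (hf.fderiv_right (m := 1) (by norm_num)).differentiableAt one_ne_zero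

section PartialDerivatives

variable {f g : ℝ × ℝ → ℝ} {p : ℝ × ℝ}

theorem differentiableAt_pd (hf : DifferentiableAt ℝ (fderiv ℝ f) p) (w : ℝ × ℝ) :
    DifferentiableAt ℝ (pd w f) p :=
  hf.clm_apply (differentiableAt_const w)

theorem pd_pd_eq_fderiv_fderiv (hf : DifferentiableAt ℝ (fderiv ℝ f) p) (w z : ℝ × ℝ) :
    pd w (pd z f) p = fderiv ℝ (fderiv ℝ f) p w z := by
  change fderiv ℝ (fun q => fderiv ℝ f q z) p w = _
  simp [fderiv_clm_apply hf (differentiableAt_const z)]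

theorem pd_pd_comm (hf : ContDiffAt ℝ 2 f p) (w z : ℝ × ℝ) :
    pd w (pd z f) p = pd z (pd w f) p := by
  have hf' := differentiableAt_fderiv_of_contDiffAt_two hf
  rw [pd_pd_eq_fderiv_fderiv hf', pd_pd_eq_fderiv_fderiv hf']
  exact hf.isSymmSndFDerivAt (by simp) w z

theorem pd_congr (hfg : f =ᶠ[𝓝 p] g) (w : ℝ × ℝ) : pd w f p = pd w g p := by
  simp only [pd, hfg.fderiv_eq]

theorem pd_mul (hf : DifferentiableAt ℝ f p) (hg : DifferentiableAt ℝ g p) (w : ℝ × ℝ) :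
    pd w (f * g) p = f p * pd w g p + g p * pd w f p := by
  simp [pd, fderiv_mul hf hg]

theorem pd_comp_snd {φ : ℝ → ℝ} (hφ : DifferentiableAt ℝ φ p.2) (w : ℝ × ℝ) :
    pd w (fun q => φ q.2) p = w.2 * deriv φ p.2 := by
  have h := hφ.hasDerivAt.comp_hasFDerivAt p (hasFDerivAt_snd (𝕜 := ℝ))
  simpa [pd, Function.comp_def, mul_comm] using congrArg (· w) h.fderiv

end PartialDerivatives

section TransportDerivative

/-- The first-order operator `∂_y - a ∂_x`, the derivative along the vector field `(-a, 1)`. It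
annihilates `u` when `a` is the quotient `u_y / u_x`. -/
noncomputable def transportDeriv (a f : ℝ × ℝ → ℝ) (p : ℝ × ℝ) : ℝ :=
  dy f p - a p * dx f p

variable {a b f g u : ℝ × ℝ → ℝ} {p : ℝ × ℝ}

theorem transportDeriv_congr (hfg : f =ᶠ[𝓝 p] g) :
    transportDeriv a f p = transportDeriv a g p := by
  simp only [transportDeriv, dx, dy, pd_congr hfg]

theorem transportDeriv_mul (hf : DifferentiableAt ℝ f p) (hg : DifferentiableAt ℝ g p) :
    transportDeriv a (f * g) p = f p * transportDeriv a g p + g p * transportDeriv a f p := by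
  simp only [transportDeriv, dx, dy, pd_mul hf hg]
  ring

theorem transportDeriv_comp_snd {φ : ℝ → ℝ} (hφ : DifferentiableAt ℝ φ p.2) :
    transportDeriv a (fun q => φ q.2) p = deriv φ p.2 := by
  simp [transportDeriv, dx, dy, pd_comp_snd hφ]

theorem transportDeriv_dx (hu : ContDiffAt ℝ 2 u p) (ha : DifferentiableAt ℝ a p)
    (hau : dy u =ᶠ[𝓝 p] a * dx u) :
    transportDeriv a (dx u) p = dx u p * dx a p := by
  have hux : DifferentiableAt ℝ (dx u) p :=
    differentiableAt_pd (differentiableAt_fderiv_of_contDiffAt_two hu) _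
  have hcomm : dy (dx u) p = dx (dy u) p := pd_pd_comm hu _ _
  have hdiff : dx (dy u) p = a p * dx (dx u) p + dx u p * dx a p :=
    (pd_congr hau _).trans (pd_mul ha hux _)
  rw [transportDeriv, hcomm, hdiff]
  ring

theorem transportDeriv_mul_dx (hu : ContDiffAt ℝ 2 u p) (ha : DifferentiableAt ℝ a p)
    (hb : DifferentiableAt ℝ b p) (hau : dy u =ᶠ[𝓝 p] a * dx u) :
    transportDeriv a (b * dx u) p = dx u p * (transportDeriv a b p + b p * dx a p) := by
  have hux : DifferentiableAt ℝ (dx u) p :=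
    differentiableAt_pd (differentiableAt_fderiv_of_contDiffAt_two hu) _
  rw [transportDeriv_mul hb hux, transportDeriv_dx hu ha hau]
  ring

theorem transportDeriv_eq_of_mul_dx_eq_comp_snd {φ : ℝ → ℝ} (hu : ContDiffAt ℝ 2 u p)
    (ha : DifferentiableAt ℝ a p) (hb : DifferentiableAt ℝ b p) (hφ : DifferentiableAt ℝ φ p.2)
    (hx : dx u p ≠ 0) (hau : dy u =ᶠ[𝓝 p] a * dx u)
    (hbu : b * dx u =ᶠ[𝓝 p] fun q => φ q.2) :
    transportDeriv a b p = deriv φ p.2 / dx u p - b p * dx a p := by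
  refine eq_sub_of_add_eq (eq_div_of_mul_eq hx ?_)
  calc (transportDeriv a b p + b p * dx a p) * dx u p
      = transportDeriv a (b * dx u) p := by rw [transportDeriv_mul_dx hu ha hb hau, mul_comm]
    _ = transportDeriv a (fun q => φ q.2) p := transportDeriv_congr hbu
    _ = deriv φ p.2 := transportDeriv_comp_snd hφ

end TransportDerivative

theorem eq1_potential_equation_general {u v : ℝ × ℝ → ℝ} {p : ℝ × ℝ}
    (hu : ContDiffAt ℝ 2 u p) (hv : ContDiffAt ℝ 2 v p) (hx : dx u p ≠ 0)
    (hvx : ∀ᶠ q in 𝓝 p, dx v q = dy u q / dx u q)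
    (hvy : ∀ᶠ q in 𝓝 p, dy v q = Real.exp q.2 / dx u q) :
    dy v p - dy (dy v) p = dy v p * dx (dx v) p - dx v p * dy (dx v) p := by
  have hu' := differentiableAt_fderiv_of_contDiffAt_two hu
  have hv' := differentiableAt_fderiv_of_contDiffAt_two hv
  have hx_near : ∀ᶠ q in 𝓝 p, dx u q ≠ 0 :=
    (differentiableAt_pd hu' _).continuousAt.eventually_ne hx
  have huy : dy u =ᶠ[𝓝 p] dx v * dx u := by
    filter_upwards [hvx, hx_near] with q hq hxq using ((eq_div_iff hxq).mp hq).symm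
  have hexp : dy v * dx u =ᶠ[𝓝 p] fun q => Real.exp q.2 := by
    filter_upwards [hvy, hx_near] with q hq hxq using (eq_div_iff hxq).mp hq
  have hD : dy (dy v) p - dx v p * dx (dy v) p = dy v p - dy v p * dx (dx v) p := by
    have h := transportDeriv_eq_of_mul_dx_eq_comp_snd hu (differentiableAt_pd hv' _)
      (differentiableAt_pd hv' _) Real.differentiableAt_exp hx huy hexp
    rwa [Real.deriv_exp, ← hvy.self_of_nhds] at h
  have hcomm : dx (dy v) p = dy (dx v) p := pd_pd_comm hv _ _
  rw [hcomm] at hD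
  linear_combination -hD

/-- If `u` is a smooth solution of Equation (1)
`u_y·u_xy − u_x·u_yy = e^y·u_xx` with `u_x` nowhere zero, and `v` is a smooth
potential with `v_x = u_y/u_x` and `v_y = e^y/u_x`, then
`v_y − v_yy = v_y·v_xx − v_x·v_xy`. -/
theorem eq1_potential_equation (u v : ℝ × ℝ → ℝ)
    (hu : ContDiff ℝ (⊤ : ℕ∞) u) (hv : ContDiff ℝ (⊤ : ℕ∞) v)
    (hx : ∀ p : ℝ × ℝ, dx u p ≠ 0)
    (hsol : ∀ p : ℝ × ℝ,
      dy u p * dy (dx u) p - dx u p * dy (dy u) p = Real.exp p.2 * dx (dx u) p)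
    (hvx : ∀ p : ℝ × ℝ, dx v p = dy u p / dx u p)
    (hvy : ∀ p : ℝ × ℝ, dy v p = Real.exp p.2 / dx u p) :
    ∀ p : ℝ × ℝ,
      dy v p - dy (dy v) p = dy v p * dx (dx v) p - dx v p * dy (dx v) p :=
  fun p => eq1_potential_equation_general (contDiff_infty.mp hu 2).contDiffAt
    (contDiff_infty.mp hv 2).contDiffAt (hx p) (.of_forall hvx) (.of_forall hvy)
end
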